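/- arXiv:1301.3051 — 6 statements merged into one kernel-verified Lean document; each statement's English description precedes it below -/
import Mathlib

section
/- Let a < b be real numbers and let (f_n) be a sequence of real-valued functions on [a,b], each convex on [a,b] and differentiable at every point of the open interval (a,b). Assume (f_n) converges uniformly on [a,b] to some function f. Then for all real numbers alpha, beta with a < alpha <= beta < b there exists a constant c such that |f_n'(x)| <= c for every n and every x in [alpha, beta]. -/
open Filter Set

/-!
Convexity squeezes the derivative between difference quotients taken outside a compact set `K` of
interior points: if `K ⊆ [α, β]` with `a < α` and `β < b`, then for `x ∈ K` the slope over `[a, α]`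
is at most `f' x`, which is at most the slope over `[β, b]`. These two slopes involve the values of
`f` at four points only, so they are bounded along any pointwise bounded family, and a convergent
sequence is pointwise bounded.
-/

section Convex

variable {s : Set ℝ} {f : ℝ → ℝ} {a α x β b : ℝ}

lemma slope_le_deriv_of_convexOn_of_le (hf : ConvexOn ℝ s f) (ha : a ∈ s) (hx : x ∈ s)
    (haα : a < α) (hαx : α ≤ x) (hfx : DifferentiableAt ℝ f x) :
    slope f a α ≤ deriv f x := by
  have hax : a < x := haα.trans_le hαx
  have hα : α ∈ s := hf.1.ordConnected.out ha hx ⟨haα.le, hαx⟩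
  calc
    slope f a α ≤ slope f a x := hf.slope_mono ha ⟨hα, haα.ne'⟩ ⟨hx, hax.ne'⟩ hαx
    _ ≤ deriv f x := hf.slope_le_deriv ha hx hax hfx

lemma deriv_le_slope_of_convexOn_of_le (hf : ConvexOn ℝ s f) (hx : x ∈ s) (hb : b ∈ s)
    (hxβ : x ≤ β) (hβb : β < b) (hfx : DifferentiableAt ℝ f x) :
    deriv f x ≤ slope f β b := by
  have hxb : x < b := hxβ.trans_lt hβb
  have hβ : β ∈ s := hf.1.ordConnected.out hx hb ⟨hxβ, hβb.le⟩
  calc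
    deriv f x ≤ slope f x b := hf.deriv_le_slope hx hb hxb hfx
    _ = slope f b x := slope_comm f x b
    _ ≤ slope f b β := hf.slope_mono hb ⟨hx, hxb.ne⟩ ⟨hβ, hβb.ne⟩ hxβ
    _ = slope f β b := slope_comm f b β

lemma abs_deriv_le_max_abs_slope_of_convexOn (hf : ConvexOn ℝ s f) (ha : a ∈ s) (hb : b ∈ s)
    (haα : a < α) (hβb : β < b) (hx : x ∈ Icc α β) (hfx : DifferentiableAt ℝ f x) :
    |deriv f x| ≤ max |slope f a α| |slope f β b| := by
  have hxs : x ∈ s := hf.1.ordConnected.out ha hb ⟨haα.le.trans hx.1, hx.2.trans hβb.le⟩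
  exact abs_le_max_abs_abs (slope_le_deriv_of_convexOn_of_le hf ha hxs haα hx.1 hfx)
    (deriv_le_slope_of_convexOn_of_le hf hxs hb hx.2 hβb hfx)

end Convex

lemma isBounded_range_slope {ι 𝕜 E : Type*} [NormedField 𝕜] [SeminormedAddCommGroup E]
    [NormedSpace 𝕜 E] {f : ι → 𝕜 → E} {x y : 𝕜}
    (hx : Bornology.IsBounded (range (f · x))) (hy : Bornology.IsBounded (range (f · y))) :
    Bornology.IsBounded (range fun i ↦ slope (f i) x y) := by
  refine ((hy.sub hx).smul₀ (y - x)⁻¹).subset ?_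
  rintro _ ⟨i, rfl⟩
  exact smul_mem_smul_set (sub_mem_sub (mem_range_self i) (mem_range_self i))

theorem stmt_0_general {ι : Type*} {s K : Set ℝ} {f : ι → ℝ → ℝ}
    (hK : IsCompact K) (hKs : K ⊆ interior s) (hconv : ∀ i, ConvexOn ℝ s (f i))
    (hdiff : ∀ i, ∀ x ∈ K, DifferentiableAt ℝ (f i) x)
    (hbdd : ∀ x ∈ s, Bornology.IsBounded (range (f · x))) :
    ∃ c : ℝ, ∀ i, ∀ x ∈ K, |deriv (f i) x| ≤ c := by
  obtain rfl | hne := K.eq_empty_or_nonempty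
  · exact ⟨0, fun _ _ hx ↦ hx.elim⟩
  obtain ⟨α, hα⟩ := hK.exists_isLeast hne
  obtain ⟨β, hβ⟩ := hK.exists_isGreatest hne
  obtain ⟨a, haα, ha⟩ : ∃ a < α, a ∈ s :=
    Eventually.exists_lt (mem_interior_iff_mem_nhds.mp (hKs hα.1))
  obtain ⟨b, hβb, hb⟩ : ∃ b > β, b ∈ s :=
    Eventually.exists_gt (mem_interior_iff_mem_nhds.mp (hKs hβ.1))
  obtain ⟨m, hm⟩ := (isBounded_range_slope (hbdd a ha)
    (hbdd α (interior_subset (hKs hα.1)))).exists_norm_le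
  obtain ⟨M, hM⟩ := (isBounded_range_slope (hbdd β (interior_subset (hKs hβ.1)))
    (hbdd b hb)).exists_norm_le
  refine ⟨max m M, fun i x hx ↦ ?_⟩
  calc
    |deriv (f i) x| ≤ max |slope (f i) a α| |slope (f i) β b| :=
      abs_deriv_le_max_abs_slope_of_convexOn (hconv i) ha hb haα hβb ⟨hα.2 hx, hβ.2 hx⟩
        (hdiff i x hx)
    _ ≤ max m M := max_le_max (hm _ (mem_range_self i)) (hM _ (mem_range_self i))

/-- If a sequence of functions, convex on `[a,b]` and differentiable on `(a,b)`,
converges uniformly on `[a,b]`, then on every compact subinterval `[α,β] ⊂ (a,b)` the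
derivatives are uniformly bounded (in `n` and `x`). -/
theorem stmt_0 (a b : ℝ) (hab : a < b) (f : ℕ → ℝ → ℝ) (F : ℝ → ℝ)
    (hconv : ∀ n, ConvexOn ℝ (Set.Icc a b) (f n))
    (hdiff : ∀ n, ∀ x ∈ Set.Ioo a b, DifferentiableAt ℝ (f n) x)
    (hunif : TendstoUniformlyOn f F Filter.atTop (Set.Icc a b)) :
    ∀ α β : ℝ, a < α → α ≤ β → β < b →
      ∃ c : ℝ, ∀ n : ℕ, ∀ x ∈ Set.Icc α β, |deriv (f n) x| ≤ c := by
  intro α β haα _ hβb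
  have hsub : Icc α β ⊆ Ioo a b := Icc_subset_Ioo haα hβb
  exact stmt_0_general isCompact_Icc (hsub.trans_eq interior_Icc.symm) hconv
    (fun n x hx ↦ hdiff n x (hsub hx))
    fun _ hx ↦ Metric.isBounded_range_of_tendsto _ (hunif.tendsto_at hx)
end

section
/- Fix a positive integer m. There exists a constant c0 > 0 (depending only on m) such that for all real numbers a, b with 1 <= a <= b and every real t >= 0, |(1 + t^a)^(m/a) / (1 + t^b)^(m/b) - 1| <= c0 * (1/a - 1/b). -/
/-!
With `f = (1, t)`, the quotient compares the `ℓ^a` and `ℓ^b` norms of `f`, raised to the power `m`.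
For a vector of `n` nonnegative reals and `0 < a ≤ b` one has
`‖f‖_b ≤ ‖f‖_a ≤ n ^ (1 / a - 1 / b) * ‖f‖_b`, so the quotient lies between `1` and
`n ^ (m * (1 / a - 1 / b))`. When `a` is bounded below, `1 / a - 1 / b` is bounded above, and
Bernoulli's inequality bounds this exponential function of `1 / a - 1 / b` by its chord.
-/

open Finset

theorem rpow_div_rpow_div {x b : ℝ} (hx : 0 ≤ x) (hb : b ≠ 0) (a c : ℝ) :
    (x ^ (b / a)) ^ (c / b) = x ^ (c / a) := by
  rw [← Real.rpow_mul hx, mul_comm, div_mul_div_cancel₀ hb]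

section PowerSums

variable {ι : Type*} {s : Finset ι} {f : ι → ℝ}

theorem sum_rpow_le_rpow_sum {p : ℝ} (hp : 1 ≤ p) (hf : ∀ i ∈ s, 0 ≤ f i) :
    ∑ i ∈ s, f i ^ p ≤ (∑ i ∈ s, f i) ^ p := by
  induction s using Finset.cons_induction with
  | empty => simp [(zero_lt_one.trans_le hp).ne']
  | cons j s hj ih =>
    rw [forall_mem_cons] at hf
    rw [sum_cons, sum_cons]
    calc f j ^ p + ∑ i ∈ s, f i ^ p
        ≤ f j ^ p + (∑ i ∈ s, f i) ^ p := by gcongr; exact ih hf.2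
      _ ≤ (f j + ∑ i ∈ s, f i) ^ p := Real.add_rpow_le_rpow_add hf.1 (sum_nonneg hf.2) hp

theorem sum_rpow_rpow_div {a : ℝ} (ha : a ≠ 0) (b : ℝ) (hf : ∀ i ∈ s, 0 ≤ f i) :
    ∑ i ∈ s, (f i ^ a) ^ (b / a) = ∑ i ∈ s, f i ^ b :=
  sum_congr rfl fun i hi ↦ by simpa only [div_one] using rpow_div_rpow_div (hf i hi) ha 1 b

variable {a b m : ℝ}

theorem rpow_sum_rpow_anti (ha : 0 < a) (hab : a ≤ b) (hm : 0 ≤ m) (hf : ∀ i ∈ s, 0 ≤ f i) :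
    (∑ i ∈ s, f i ^ b) ^ (m / b) ≤ (∑ i ∈ s, f i ^ a) ^ (m / a) := by
  have hb : 0 < b := ha.trans_le hab
  have hfa : ∀ i ∈ s, 0 ≤ f i ^ a := fun i hi ↦ Real.rpow_nonneg (hf i hi) a
  have hfb : ∀ i ∈ s, 0 ≤ f i ^ b := fun i hi ↦ Real.rpow_nonneg (hf i hi) b
  have sum_le : ∑ i ∈ s, f i ^ b ≤ (∑ i ∈ s, f i ^ a) ^ (b / a) := by
    rw [← sum_rpow_rpow_div ha.ne' b hf]
    exact sum_rpow_le_rpow_sum ((one_le_div ha).2 hab) hfa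
  calc (∑ i ∈ s, f i ^ b) ^ (m / b)
      ≤ ((∑ i ∈ s, f i ^ a) ^ (b / a)) ^ (m / b) :=
        Real.rpow_le_rpow (sum_nonneg hfb) sum_le (by positivity)
    _ = (∑ i ∈ s, f i ^ a) ^ (m / a) := rpow_div_rpow_div (sum_nonneg hfa) hb.ne' a m

theorem rpow_sum_rpow_le_card_rpow_mul (ha : 0 < a) (hab : a ≤ b) (hm : 0 ≤ m)
    (hf : ∀ i ∈ s, 0 ≤ f i) :
    (∑ i ∈ s, f i ^ a) ^ (m / a) ≤
      ((#s : ℝ) ^ m) ^ (1 / a - 1 / b) * (∑ i ∈ s, f i ^ b) ^ (m / b) := by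
  have hb : 0 < b := ha.trans_le hab
  have hfa : ∀ i ∈ s, 0 ≤ f i ^ a := fun i hi ↦ Real.rpow_nonneg (hf i hi) a
  have hfb : ∀ i ∈ s, 0 ≤ f i ^ b := fun i hi ↦ Real.rpow_nonneg (hf i hi) b
  have le_sum : (∑ i ∈ s, f i ^ a) ^ (b / a) ≤ (#s : ℝ) ^ (b / a - 1) * ∑ i ∈ s, f i ^ b := by
    rw [← sum_rpow_rpow_div ha.ne' b hf]
    exact Real.rpow_sum_le_const_mul_sum_rpow_of_nonneg s ((one_le_div ha).2 hab) hfa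
  calc (∑ i ∈ s, f i ^ a) ^ (m / a)
      = ((∑ i ∈ s, f i ^ a) ^ (b / a)) ^ (m / b) :=
        (rpow_div_rpow_div (sum_nonneg hfa) hb.ne' a m).symm
    _ ≤ ((#s : ℝ) ^ (b / a - 1) * ∑ i ∈ s, f i ^ b) ^ (m / b) :=
        Real.rpow_le_rpow (Real.rpow_nonneg (sum_nonneg hfa) _) le_sum (by positivity)
    _ = ((#s : ℝ) ^ m) ^ (1 / a - 1 / b) * (∑ i ∈ s, f i ^ b) ^ (m / b) := by
        rw [Real.mul_rpow (by positivity) (sum_nonneg hfb), ← Real.rpow_mul (Nat.cast_nonneg _),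
          ← Real.rpow_mul (Nat.cast_nonneg _)]
        congr 2
        field_simp

end PowerSums

theorem rpow_le_one_add_mul_rpow_sub_one {x r δ : ℝ} (hx : 0 ≤ x) (hr : 0 < r) (hδ : 0 ≤ δ)
    (hδr : δ ≤ 1 / r) : x ^ δ ≤ 1 + r * (x ^ (1 / r) - 1) * δ := by
  have hrδ : r * δ ≤ 1 := by rwa [mul_comm, ← le_div_iff₀ hr]
  calc x ^ δ = (1 + (x ^ (1 / r) - 1)) ^ (r * δ) := by
        rw [add_sub_cancel, ← Real.rpow_mul hx, ← mul_assoc, one_div_mul_cancel hr.ne', one_mul]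
    _ ≤ 1 + r * δ * (x ^ (1 / r) - 1) :=
        rpow_one_add_le_one_add_mul_self (by linarith [Real.rpow_nonneg hx (1 / r)])
          (by positivity) hrδ
    _ = 1 + r * (x ^ (1 / r) - 1) * δ := by ring

theorem stmt_2_general {ι : Type*} {s : Finset ι} {f : ι → ℝ} {a b m r : ℝ} (hr : 0 < r)
    (hra : r ≤ a) (hab : a ≤ b) (hm : 0 ≤ m) (hf : ∀ i ∈ s, 0 ≤ f i) (hpos : ∃ i ∈ s, 0 < f i) :
    |(∑ i ∈ s, f i ^ a) ^ (m / a) / (∑ i ∈ s, f i ^ b) ^ (m / b) - 1| ≤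
      r * (((#s : ℝ) ^ m) ^ (1 / r) - 1) * (1 / a - 1 / b) := by
  have ha : 0 < a := hr.trans_le hra
  have hb : 0 < b := ha.trans_le hab
  have denom_pos : 0 < (∑ i ∈ s, f i ^ b) ^ (m / b) := by
    obtain ⟨i, hi, hfi⟩ := hpos
    exact Real.rpow_pos_of_pos (sum_pos' (fun j hj ↦ Real.rpow_nonneg (hf j hj) b)
      ⟨i, hi, Real.rpow_pos_of_pos hfi b⟩) _
  have one_le_quotient := (one_le_div denom_pos).2 (rpow_sum_rpow_anti ha hab hm hf)
  have quotient_le := (div_le_iff₀ denom_pos).2 (rpow_sum_rpow_le_card_rpow_mul ha hab hm hf)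
  have gap_nonneg : 0 ≤ 1 / a - 1 / b := sub_nonneg.2 (one_div_le_one_div_of_le ha hab)
  have gap_le : 1 / a - 1 / b ≤ 1 / r :=
    (sub_le_self _ (by positivity)).trans (one_div_le_one_div_of_le hr hra)
  rw [abs_of_nonneg (sub_nonneg.2 one_le_quotient), sub_le_iff_le_add']
  exact quotient_le.trans
    (rpow_le_one_add_mul_rpow_sub_one (by positivity) hr gap_nonneg gap_le)

/-- For a fixed positive integer `m` there is `c0 > 0` such that for all
`1 ≤ a ≤ b` and `t ≥ 0`, `|(1+t^a)^(m/a) / (1+t^b)^(m/b) - 1| ≤ c0 * (1/a - 1/b)`. -/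
theorem stmt_2 (m : ℕ) (hm : 0 < m) :
    ∃ c0 : ℝ, 0 < c0 ∧ ∀ a b : ℝ, 1 ≤ a → a ≤ b → ∀ t : ℝ, 0 ≤ t →
      |(1 + t ^ a) ^ ((m : ℝ)/a) / (1 + t ^ b) ^ ((m : ℝ)/b) - 1| ≤ c0 * (1/a - 1/b) := by
  refine ⟨2 ^ m - 1, sub_pos.2 (one_lt_pow₀ one_lt_two hm.ne'), fun a b ha hab t ht ↦ ?_⟩
  simpa using stmt_2_general (s := univ) (f := ![1, t]) (m := m) one_pos ha hab m.cast_nonneg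
    (by simp [Fin.forall_fin_two, ht]) ⟨0, by simp⟩
end

section
/- For all real numbers a, b with 1 <= a <= b and every real x with 0 <= x <= 1, |(1 + x^b)^(-1/b) - (1 + x^a)^(-1/a)| <= (2*log 2 + 1/e) * (1/a - 1/b). -/
/-!
Write `N c = (1 + x ^ c) ^ (1 / c)` for the `ℓ^c` quasi-norm of the vector `(1, x)`. In dimension
two, `N b ≤ N a ≤ 2 ^ (1 / a - 1 / b) * N b`, so `log (N a)` and `log (N b)` differ by at most
`log 2 * (1 / a - 1 / b)`. Since `1 ≤ N c` and `t ↦ exp (-t)` is `1`-Lipschitz on `[0, ∞)`, the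
reciprocals differ by no more than the logarithms.
-/

open Real Finset

theorem Lp_le_card_rpow_mul_Lq {ι : Type*} (s : Finset ι) {f : ι → ℝ} (hf : ∀ i ∈ s, 0 ≤ f i)
    {p q : ℝ} (hp : 0 < p) (hpq : p ≤ q) :
    (∑ i ∈ s, f i ^ p) ^ (1 / p) ≤ (#s : ℝ) ^ (1 / p - 1 / q) * (∑ i ∈ s, f i ^ q) ^ (1 / q) := by
  have hq : 0 < q := hp.trans_le hpq
  have hfp : ∀ i ∈ s, 0 ≤ f i ^ p := fun i hi ↦ rpow_nonneg (hf i hi) p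
  have hfq : ∀ i ∈ s, 0 ≤ f i ^ q := fun i hi ↦ rpow_nonneg (hf i hi) q
  have power_mean : (∑ i ∈ s, f i ^ p) ^ (q / p) ≤ (#s : ℝ) ^ (q / p - 1) * ∑ i ∈ s, f i ^ q := by
    convert rpow_sum_le_const_mul_sum_rpow_of_nonneg s ((one_le_div hp).2 hpq) hfp using 2
    refine sum_congr rfl fun i hi ↦ ?_
    rw [← rpow_mul (hf i hi), mul_div_cancel₀ q hp.ne']
  calc (∑ i ∈ s, f i ^ p) ^ (1 / p) = ((∑ i ∈ s, f i ^ p) ^ (q / p)) ^ (1 / q) := by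
        rw [← rpow_mul (sum_nonneg hfp)]
        congr 1
        field_simp
    _ ≤ ((#s : ℝ) ^ (q / p - 1) * ∑ i ∈ s, f i ^ q) ^ (1 / q) :=
        rpow_le_rpow (rpow_nonneg (sum_nonneg hfp) _) power_mean (by positivity)
    _ = (#s : ℝ) ^ (1 / p - 1 / q) * (∑ i ∈ s, f i ^ q) ^ (1 / q) := by
        rw [mul_rpow (by positivity) (sum_nonneg hfq), ← rpow_mul (by positivity)]
        congr 2
        field_simp

theorem rpow_add_rpow_le_two_rpow_mul {x y p q : ℝ} (hx : 0 ≤ x) (hy : 0 ≤ y) (hp : 0 < p)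
    (hpq : p ≤ q) :
    (x ^ p + y ^ p) ^ (1 / p) ≤ 2 ^ (1 / p - 1 / q) * (x ^ q + y ^ q) ^ (1 / q) := by
  have hnonneg : ∀ i ∈ univ, 0 ≤ ![x, y] i := by simp [Fin.forall_fin_two, hx, hy]
  simpa [Fin.sum_univ_two] using Lp_le_card_rpow_mul_Lq univ hnonneg hp hpq

theorem inv_sub_inv_le_log_div {u v : ℝ} (hu : 1 ≤ u) (huv : u ≤ v) :
    u⁻¹ - v⁻¹ ≤ log (v / u) := by
  have hu₀ : 0 < u := by positivity
  have hv₀ : 0 < v := hu₀.trans_le huv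
  calc u⁻¹ - v⁻¹ = u⁻¹ * (1 - (v / u)⁻¹) := by field_simp
    _ ≤ 1 - (v / u)⁻¹ :=
        mul_le_of_le_one_left (sub_nonneg.2 (inv_le_one_of_one_le₀ ((one_le_div hu₀).2 huv)))
          (inv_le_one_of_one_le₀ hu)
    _ ≤ log (v / u) := one_sub_inv_le_log_of_pos (by positivity)

theorem stmt_3_general {a b x : ℝ} (ha : 0 < a) (hab : a ≤ b) (hx : 0 ≤ x) :
    |(1 + x ^ b) ^ (-(1 / b)) - (1 + x ^ a) ^ (-(1 / a))| ≤ log 2 * (1 / a - 1 / b) := by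
  have hb : 0 < b := ha.trans_le hab
  have hNb : 1 ≤ (1 + x ^ b) ^ (1 / b) :=
    one_le_rpow (le_add_of_nonneg_right (rpow_nonneg hx b)) (by positivity)
  have hNb_le_Na : (1 + x ^ b) ^ (1 / b) ≤ (1 + x ^ a) ^ (1 / a) := by
    simpa only [one_rpow] using rpow_add_rpow_le zero_le_one hx ha hab
  have hNa_le : (1 + x ^ a) ^ (1 / a) ≤ 2 ^ (1 / a - 1 / b) * (1 + x ^ b) ^ (1 / b) := by
    simpa only [one_rpow] using rpow_add_rpow_le_two_rpow_mul zero_le_one hx ha hab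
  rw [rpow_neg (by positivity), rpow_neg (by positivity),
    abs_of_nonneg (sub_nonneg.2 (inv_anti₀ (by positivity) hNb_le_Na))]
  calc ((1 + x ^ b) ^ (1 / b))⁻¹ - ((1 + x ^ a) ^ (1 / a))⁻¹
      ≤ log ((1 + x ^ a) ^ (1 / a) / (1 + x ^ b) ^ (1 / b)) := inv_sub_inv_le_log_div hNb hNb_le_Na
    _ ≤ log (2 ^ (1 / a - 1 / b)) :=
        log_le_log (by positivity) ((div_le_iff₀ (by positivity)).2 hNa_le)
    _ = log 2 * (1 / a - 1 / b) := by rw [log_rpow two_pos, mul_comm]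

/-- For `1 ≤ a ≤ b` and `0 ≤ x ≤ 1`,
`|(1+x^b)^(-1/b) - (1+x^a)^(-1/a)| ≤ (2 log 2 + 1/e) * (1/a - 1/b)`. -/
theorem stmt_3 (a b : ℝ) (ha : 1 ≤ a) (hab : a ≤ b) (x : ℝ) (hx0 : 0 ≤ x) (hx1 : x ≤ 1) :
    |(1 + x ^ b) ^ (-(1/b)) - (1 + x ^ a) ^ (-(1/a))| ≤
      (2 * Real.log 2 + 1 / Real.exp 1) * (1/a - 1/b) := by
  refine (stmt_3_general (by positivity) hab hx0).trans (mul_le_mul_of_nonneg_right ?_ ?_)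
  · linarith [log_pos one_lt_two, one_div_pos.2 (exp_pos 1)]
  · exact sub_nonneg.2 (one_div_le_one_div_of_le (by positivity) hab)
end

section
/- There exists a constant C > 0 such that for all real numbers a, b with 2 <= a <= b and every real x with 0 < x <= 1, one has 0 <= 1/(1 + x^b) - 1/(1 + x^a) <= C * x * log(b/a). -/
/-!
Differentiating `x ^ s` with respect to `log s` gives `-y * exp (-y)` with `y = -s * log x`, and
`y * exp (-y) ≤ exp (-1)`. Hence `x ^ a - x ^ b ≤ exp (-1) * log (b / a)`, uniformly in `x`.
To gain the decay `x ^ c` for `c < a`, apply this to the exponents `a - c` and `b - c`; Bernoulli's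
inequality compares `log ((b - c) / (a - c))` with `log (b / a)`.
-/

open Real Set

section

variable {a b c x : ℝ}

theorem monotoneOn_const_rpow_add_log (hx : 0 < x) :
    MonotoneOn (fun s : ℝ ↦ x ^ s + exp (-1) * log s) (Ioi 0) := by
  have hderiv : ∀ s ∈ Ioi (0 : ℝ), HasDerivAt (fun s : ℝ ↦ x ^ s + exp (-1) * log s)
      (x ^ s * log x + exp (-1) * s⁻¹) s := fun s hs ↦
    (hasStrictDerivAt_const_rpow hx s).hasDerivAt.add
      ((hasDerivAt_log (ne_of_gt hs)).const_mul _)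
  refine monotoneOn_of_hasDerivWithinAt_nonneg (convex_Ioi 0)
    (fun s hs ↦ (hderiv s hs).continuousAt.continuousWithinAt)
    (fun s hs ↦ (hderiv s (interior_subset hs)).hasDerivWithinAt) fun s hs ↦ ?_
  have hs : 0 < s := interior_subset hs
  have hbound : -(log x * s) * x ^ s ≤ exp (-1) := by
    simpa only [neg_neg, rpow_def_of_pos hx] using mul_exp_neg_le_exp_neg_one (-(log x * s))
  calc 0 ≤ (exp (-1) - -(log x * s) * x ^ s) / s := div_nonneg (sub_nonneg.2 hbound) hs.le
    _ = x ^ s * log x + exp (-1) * s⁻¹ := by field_simp; ring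

theorem const_rpow_sub_const_rpow_le_log_div (hx : 0 < x) (ha : 0 < a) (hab : a ≤ b) :
    x ^ a - x ^ b ≤ exp (-1) * log (b / a) := by
  have hb : 0 < b := ha.trans_le hab
  have hmono : x ^ a + exp (-1) * log a ≤ x ^ b + exp (-1) * log b :=
    monotoneOn_const_rpow_add_log hx ha hb hab
  rw [log_div hb.ne' ha.ne']
  linarith

theorem log_sub_div_sub_le (hc : 0 ≤ c) (hca : c < a) (hcb : c < b) :
    log ((b - c) / (a - c)) ≤ a / (a - c) * log (b / a) := by
  have ha : 0 < a := hc.trans_lt hca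
  have hb : 0 < b := hc.trans_lt hcb
  have hac : 0 < a - c := sub_pos.2 hca
  have hbernoulli : (b - c) / (a - c) ≤ (b / a) ^ (a / (a - c)) :=
    calc (b - c) / (a - c) = 1 + a / (a - c) * (b / a - 1) := by field_simp; ring
      _ ≤ (1 + (b / a - 1)) ^ (a / (a - c)) :=
        one_add_mul_self_le_rpow_one_add (by linarith [div_pos hb ha])
          ((one_le_div hac).2 (sub_le_self a hc))
      _ = (b / a) ^ (a / (a - c)) := by rw [add_sub_cancel]
  calc log ((b - c) / (a - c)) ≤ log ((b / a) ^ (a / (a - c))) :=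
        log_le_log (div_pos (sub_pos.2 hcb) hac) hbernoulli
    _ = a / (a - c) * log (b / a) := log_rpow (div_pos hb ha) _

theorem const_rpow_sub_const_rpow_le_rpow_mul_log_div (hx : 0 < x) (hc : 0 ≤ c) (hca : c < a)
    (hab : a ≤ b) :
    x ^ a - x ^ b ≤ exp (-1) * (a / (a - c)) * x ^ c * log (b / a) :=
  calc x ^ a - x ^ b = x ^ c * (x ^ (a - c) - x ^ (b - c)) := by
        rw [mul_sub, ← rpow_add hx, ← rpow_add hx, add_sub_cancel, add_sub_cancel]
    _ ≤ x ^ c * (exp (-1) * log ((b - c) / (a - c))) := by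
        gcongr
        exact const_rpow_sub_const_rpow_le_log_div hx (sub_pos.2 hca) (sub_le_sub_right hab c)
    _ ≤ x ^ c * (exp (-1) * (a / (a - c) * log (b / a))) := by
        gcongr
        exact log_sub_div_sub_le hc hca (hca.trans_le hab)
    _ = exp (-1) * (a / (a - c)) * x ^ c * log (b / a) := by ring

theorem one_div_one_add_sub_one_div_one_add_le {u v : ℝ} (hv : 0 ≤ v) (hvu : v ≤ u) :
    1 / (1 + v) - 1 / (1 + u) ≤ u - v := by
  have hu : 0 ≤ u := hv.trans hvu
  calc 1 / (1 + v) - 1 / (1 + u) = (u - v) / ((1 + v) * (1 + u)) := by field_simp; ring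
    _ ≤ u - v := div_le_self (sub_nonneg.2 hvu)
        (one_le_mul_of_one_le_of_one_le (le_add_of_nonneg_right hv) (le_add_of_nonneg_right hu))

theorem stmt_4_general {p : ℝ} (hc : 0 ≤ c) (hcp : c < p) :
    ∃ C : ℝ, 0 < C ∧ ∀ a b : ℝ, p ≤ a → a ≤ b → ∀ x : ℝ, 0 < x → x ≤ 1 →
      0 ≤ 1 / (1 + x ^ b) - 1 / (1 + x ^ a) ∧
      1 / (1 + x ^ b) - 1 / (1 + x ^ a) ≤ C * x ^ c * log (b / a) := by
  have hp : 0 < p := hc.trans_lt hcp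
  have hpc : 0 < p - c := sub_pos.2 hcp
  refine ⟨exp (-1) * (p / (p - c)), by positivity, fun a b hpa hab x hx hx1 ↦ ?_⟩
  have hba : x ^ b ≤ x ^ a := rpow_le_rpow_of_exponent_ge hx hx1 hab
  have hlog : 0 ≤ log (b / a) := log_nonneg ((one_le_div (hp.trans_le hpa)).2 hab)
  have hratio : a / (a - c) ≤ p / (p - c) := by
    rw [div_le_div_iff₀ (by linarith) hpc]
    linarith [mul_le_mul_of_nonneg_left hpa hc]
  refine ⟨sub_nonneg.2 (one_div_le_one_div_of_le (by positivity) (by gcongr)), ?_⟩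
  calc 1 / (1 + x ^ b) - 1 / (1 + x ^ a) ≤ x ^ a - x ^ b :=
        one_div_one_add_sub_one_div_one_add_le (rpow_nonneg hx.le b) hba
    _ ≤ exp (-1) * (a / (a - c)) * x ^ c * log (b / a) :=
        const_rpow_sub_const_rpow_le_rpow_mul_log_div hx hc (hcp.trans_le hpa) hab
    _ ≤ exp (-1) * (p / (p - c)) * x ^ c * log (b / a) := by gcongr

end

/-- There is `C > 0` such that for all `2 ≤ a ≤ b` and `0 < x ≤ 1`,
`0 ≤ 1/(1+x^b) - 1/(1+x^a) ≤ C * x * log (b/a)`. -/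
theorem stmt_4 :
    ∃ C : ℝ, 0 < C ∧ ∀ a b : ℝ, 2 ≤ a → a ≤ b → ∀ x : ℝ, 0 < x → x ≤ 1 →
      0 ≤ 1/(1 + x ^ b) - 1/(1 + x ^ a) ∧
      1/(1 + x ^ b) - 1/(1 + x ^ a) ≤ C * x * Real.log (b/a) := by
  simpa only [rpow_one] using stmt_4_general zero_le_one one_lt_two
end

section
/- For every real x with 0 < x < 1 and every real lambda with 0 < lambda <= 1, 1/(1 + x) - 1/(1 + x^lambda) >= ((1 - lambda)/4) * x * (-log x). -/
/-!
By convexity of `a ↦ x ^ a`, its tangent line at `a = 1` gives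
`(1 - λ) * x * (-log x) ≤ x ^ λ - x`. For `0 ≤ λ ≤ 1` the point `x ^ λ` lies between `x` and `1`,
and `t ↦ 1 / (1 + t) + t / 4` decreases towards its minimum at `1` from either side, so
replacing `x` by `x ^ λ` decreases it.
-/

open Set

theorem rpow_mul_log_mul_sub_le_rpow_sub_rpow {x : ℝ} (hx : 0 < x) (a b : ℝ) :
    x ^ b * (Real.log x * (a - b)) ≤ x ^ a - x ^ b := by
  have exp_bound : Real.log x * (a - b) + 1 ≤ x ^ (a - b) := by
    rw [Real.rpow_def_of_pos hx]
    exact Real.add_one_le_exp _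
  calc
    x ^ b * (Real.log x * (a - b)) ≤ x ^ b * (x ^ (a - b) - 1) := by
      gcongr
      exact le_sub_iff_add_le.mpr exp_bound
    _ = x ^ a - x ^ b := by
      rw [mul_sub_one, ← Real.rpow_add hx, add_sub_cancel]

section OrderedField

variable {K : Type*} [Field K]

theorem one_div_one_add_add_div_four_sub {s t : K} (h4 : (4 : K) ≠ 0)
    (hs : 1 + s ≠ 0) (ht : 1 + t ≠ 0) :
    (1 / (1 + s) + s / 4) - (1 / (1 + t) + t / 4) =
      (t - s) * (4 - (1 + s) * (1 + t)) / (4 * ((1 + s) * (1 + t))) := by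
  field_simp
  ring

variable [LinearOrder K] [IsStrictOrderedRing K]

theorem antitoneOn_one_div_one_add_add_div_four :
    AntitoneOn (fun t : K ↦ 1 / (1 + t) + t / 4) (Ioc (-1) 1) := by
  rintro s ⟨hs, hs_one⟩ t ⟨ht, ht_one⟩ hst
  have hs_pos : 0 < 1 + s := neg_lt_iff_pos_add'.mp hs
  have ht_pos : 0 < 1 + t := neg_lt_iff_pos_add'.mp ht
  have prod_le_four : (1 + s) * (1 + t) ≤ 4 := by
    calc
      (1 + s) * (1 + t) ≤ (1 + 1) * (1 + 1) := by gcongr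
      _ = 4 := by norm_num
  rw [← sub_nonneg, one_div_one_add_add_div_four_sub four_ne_zero hs_pos.ne' ht_pos.ne']
  exact div_nonneg (mul_nonneg (sub_nonneg.mpr hst) (sub_nonneg.mpr prod_le_four)) (by positivity)

theorem monotoneOn_one_div_one_add_add_div_four :
    MonotoneOn (fun t : K ↦ 1 / (1 + t) + t / 4) (Ici 1) := by
  intro s hs t ht hst
  rw [mem_Ici] at hs ht
  have hs_pos : 0 < 1 + s := by positivity
  have ht_pos : 0 < 1 + t := by positivity
  have four_le_prod : 4 ≤ (1 + s) * (1 + t) := by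
    calc
      (4 : K) = (1 + 1) * (1 + 1) := by norm_num
      _ ≤ (1 + s) * (1 + t) := by gcongr
  rw [← sub_nonneg, one_div_one_add_add_div_four_sub four_ne_zero ht_pos.ne' hs_pos.ne',
    mul_comm (1 + t)]
  exact div_nonneg (mul_nonneg_of_nonpos_of_nonpos (sub_nonpos.mpr hst)
    (sub_nonpos.mpr four_le_prod)) (by positivity)

end OrderedField

theorem stmt_5_general {x lam : ℝ} (hx : 0 < x) (hl0 : 0 ≤ lam) (hl1 : lam ≤ 1) :
    ((1 - lam)/4) * x * (-Real.log x) ≤ 1/(1 + x) - 1/(1 + x ^ lam) := by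
  have tangent : x * (Real.log x * (lam - 1)) ≤ x ^ lam - x := by
    simpa only [Real.rpow_one] using rpow_mul_log_mul_sub_le_rpow_sub_rpow hx lam 1
  have toward_one : 1 / (1 + x ^ lam) + x ^ lam / 4 ≤ 1 / (1 + x) + x / 4 := by
    rcases le_total x 1 with hx1 | hx1
    · have x_le_rpow : x ≤ x ^ lam := Real.self_le_rpow_of_le_one hx.le hx1 hl1
      have rpow_le_one : x ^ lam ≤ 1 := Real.rpow_le_one hx.le hx1 hl0
      exact antitoneOn_one_div_one_add_add_div_four ⟨by linarith, hx1⟩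
        ⟨by linarith, rpow_le_one⟩ x_le_rpow
    · have rpow_le_x : x ^ lam ≤ x := Real.rpow_le_self_of_one_le hx1 hl1
      exact monotoneOn_one_div_one_add_add_div_four (Real.one_le_rpow hx1 hl0) hx1 rpow_le_x
  linarith

/-- For `0 < x < 1` and `0 < λ ≤ 1`,
`1/(1+x) - 1/(1+x^λ) ≥ ((1-λ)/4) * x * (-log x)`. -/
theorem stmt_5 (x : ℝ) (hx0 : 0 < x) (hx1 : x < 1) (lam : ℝ) (hl0 : 0 < lam) (hl1 : lam ≤ 1) :
    ((1 - lam)/4) * x * (-Real.log x) ≤ 1/(1 + x) - 1/(1 + x ^ lam) :=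
  stmt_5_general hx0 hl0.le hl1
end

section
/- For every real t >= 0 and all natural numbers p, q with 2 <= q <= p, one has 2^(-2*pi^2/3) <= (1 + t^p)^(4/p) / (1 + t^q)^(4/q) <= 1. -/
/-!
Up to the exponent `4`, the quotient compares the `ℓᵖ` and `ℓ^q` (quasi-)norms of the vector
`(1, t)`. These norms decrease in the exponent, which gives the upper bound. The corresponding
*means* increase in the exponent, by Jensen's inequality for `x ↦ x ^ (p / q)`; normalising a mean
of two numbers costs a factor `2 ^ (1 / r)`, so the quotient is at least `2 ^ (4 / p - 4 / q)`, with
equality at `t = 1`. For `2 ≤ q` this is at least `2 ^ (-2)`, and `2 ≤ 2π² / 3`. Comparing the two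
means directly replaces the telescoping product over the consecutive exponents between `q` and `p`.
-/

open Finset Real

section PowerMeans

variable {ι : Type*} {s : Finset ι} {z : ι → ℝ} {p q : ℝ}

theorem rpow_mean_le_rpow_mean {w : ι → ℝ} (hw : ∀ i ∈ s, 0 ≤ w i) (hw' : ∑ i ∈ s, w i = 1)
    (hz : ∀ i ∈ s, 0 ≤ z i) (hq : 0 < q) (hqp : q ≤ p) :
    (∑ i ∈ s, w i * z i ^ q) ^ (1 / q) ≤ (∑ i ∈ s, w i * z i ^ p) ^ (1 / p) := by
  have hzq : ∀ i ∈ s, 0 ≤ z i ^ q := fun i hi ↦ rpow_nonneg (hz i hi) q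
  have hzp : ∀ i ∈ s, (z i ^ q) ^ (p / q) = z i ^ p := fun i hi ↦ by
    rw [← rpow_mul (hz i hi), mul_div_cancel₀ p hq.ne']
  have jensen : ∑ i ∈ s, w i * z i ^ q ≤ (∑ i ∈ s, w i * z i ^ p) ^ (q / p) := by
    simpa only [sum_congr rfl fun i hi ↦ congrArg (w i * ·) (hzp i hi), one_div_div] using
      arith_mean_le_rpow_mean s w (fun i ↦ z i ^ q) hw hw' hzq ((one_le_div hq).2 hqp)
  calc (∑ i ∈ s, w i * z i ^ q) ^ (1 / q)
      ≤ ((∑ i ∈ s, w i * z i ^ p) ^ (q / p)) ^ (1 / q) :=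
        rpow_le_rpow (sum_nonneg fun i hi ↦ mul_nonneg (hw i hi) (hzq i hi)) jensen (by positivity)
    _ = (∑ i ∈ s, w i * z i ^ p) ^ (1 / p) := by
        rw [← rpow_mul (sum_nonneg fun i hi ↦ mul_nonneg (hw i hi) (rpow_nonneg (hz i hi) p)),
          div_mul_div_cancel₀' hq.ne', one_div]

theorem card_rpow_mul_rpow_sum_le_rpow_sum (hs : s.Nonempty) (hz : ∀ i ∈ s, 0 ≤ z i) (hq : 0 < q)
    (hqp : q ≤ p) :
    (#s : ℝ) ^ (1 / p - 1 / q) * (∑ i ∈ s, z i ^ q) ^ (1 / q) ≤ (∑ i ∈ s, z i ^ p) ^ (1 / p) := by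
  have hcard : (0 : ℝ) < #s := by exact_mod_cast hs.card_pos
  have hsum : ∀ r : ℝ, 0 ≤ ∑ i ∈ s, z i ^ r :=
    fun r ↦ sum_nonneg fun i hi ↦ rpow_nonneg (hz i hi) r
  have normalise : ∀ r : ℝ, (∑ i ∈ s, (#s : ℝ)⁻¹ * z i ^ r) ^ (1 / r) =
      (∑ i ∈ s, z i ^ r) ^ (1 / r) / (#s : ℝ) ^ (1 / r) := fun r ↦ by
    rw [← mul_sum, inv_mul_eq_div, div_rpow (hsum r) hcard.le]
  have mean_le : (∑ i ∈ s, (#s : ℝ)⁻¹ * z i ^ q) ^ (1 / q) ≤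
      (∑ i ∈ s, (#s : ℝ)⁻¹ * z i ^ p) ^ (1 / p) :=
    rpow_mean_le_rpow_mean (fun _ _ ↦ by positivity)
      (by rw [sum_const, nsmul_eq_mul, mul_inv_cancel₀ hcard.ne']) hz hq hqp
  rw [normalise, normalise, le_div_iff₀ (by positivity)] at mean_le
  rw [rpow_sub hcard]
  exact mean_le.trans_eq' (by ring)

end PowerMeans

theorem two_rpow_mul_rpow_add_rpow_le {a b p q : ℝ} (ha : 0 ≤ a) (hb : 0 ≤ b) (hq : 0 < q)
    (hqp : q ≤ p) :
    2 ^ (1 / p - 1 / q) * (a ^ q + b ^ q) ^ (1 / q) ≤ (a ^ p + b ^ p) ^ (1 / p) := by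
  have hab : ∀ i ∈ univ, 0 ≤ ![a, b] i := by simp [Fin.forall_fin_two, ha, hb]
  simpa using card_rpow_mul_rpow_sum_le_rpow_sum univ_nonempty hab hq hqp

theorem neg_two_mul_pi_sq_div_three_le_four_div_sub {p q : ℝ} (hp : 0 ≤ p) (hq : 2 ≤ q) :
    -(2 * π ^ 2 / 3) ≤ 4 / p - 4 / q := by
  have hp' : 0 ≤ 4 / p := by positivity
  have hq' : 4 / q ≤ 2 := by rw [div_le_iff₀ (by linarith)]; linarith
  nlinarith [pi_gt_three]

theorem stmt_8_general {t p q c : ℝ} (ht : 0 ≤ t) (hq : 0 < q) (hqp : q ≤ p) (hc : 0 ≤ c) :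
    2 ^ (c / p - c / q) ≤ (1 + t ^ p) ^ (c / p) / (1 + t ^ q) ^ (c / q) ∧
    (1 + t ^ p) ^ (c / p) / (1 + t ^ q) ^ (c / q) ≤ 1 := by
  have hpos : ∀ r : ℝ, 0 < (1 + t ^ r) ^ (1 / r) := fun r ↦ by positivity
  have hpow : ∀ r : ℝ, (1 + t ^ r) ^ (c / r) = ((1 + t ^ r) ^ (1 / r)) ^ c := fun r ↦ by
    rw [← rpow_mul (by positivity), one_div_mul_eq_div]
  have htwo : (2 : ℝ) ^ (c / p - c / q) = (2 ^ (1 / p - 1 / q)) ^ c := by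
    rw [← rpow_mul zero_le_two, sub_mul, one_div_mul_eq_div, one_div_mul_eq_div]
  have lower : 2 ^ (1 / p - 1 / q) ≤ (1 + t ^ p) ^ (1 / p) / (1 + t ^ q) ^ (1 / q) := by
    rw [le_div_iff₀ (hpos q)]
    simpa only [one_rpow] using two_rpow_mul_rpow_add_rpow_le zero_le_one ht hq hqp
  have upper : (1 + t ^ p) ^ (1 / p) / (1 + t ^ q) ^ (1 / q) ≤ 1 := by
    rw [div_le_one (hpos q)]
    simpa only [one_rpow] using rpow_add_rpow_le zero_le_one ht hq hqp
  rw [hpow, hpow, htwo, ← div_rpow (hpos p).le (hpos q).le]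
  exact ⟨rpow_le_rpow (by positivity) lower hc,
    rpow_le_one (div_pos (hpos p) (hpos q)).le upper hc⟩

/-- For `t ≥ 0` and naturals `2 ≤ q ≤ p`,
`2^(-2π²/3) ≤ (1+t^p)^(4/p) / (1+t^q)^(4/q) ≤ 1`. -/
theorem stmt_8 (t : ℝ) (ht : 0 ≤ t) (p q : ℕ) (hq : 2 ≤ q) (hqp : q ≤ p) :
    (2 : ℝ) ^ (-(2 * Real.pi ^ 2 / 3)) ≤ (1 + t ^ p) ^ ((4 : ℝ)/p) / (1 + t ^ q) ^ ((4 : ℝ)/q) ∧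
    (1 + t ^ p) ^ ((4 : ℝ)/p) / (1 + t ^ q) ^ ((4 : ℝ)/q) ≤ 1 := by
  have hq' : (2 : ℝ) ≤ q := by exact_mod_cast hq
  have bounds := stmt_8_general ht (zero_lt_two.trans_le hq') (Nat.cast_le.2 hqp) zero_le_four
  simp only [rpow_natCast] at bounds
  exact bounds.imp_left <| (rpow_le_rpow_of_exponent_le one_le_two
    (neg_two_mul_pi_sq_div_three_le_four_div_sub p.cast_nonneg hq')).trans
end
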